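/- Let k ≥ 2 and let λ be a partition with empty k-core, p := |λ|/k. Then the irreducible character of S_{kp} indexed by λ, evaluated on permutations of cycle type (k^p), satisfies χ^λ_{(k^p)} = sign(π_λ) · |RHT_{(k^p)}^λ|, where π_λ is the common zero permutation of all rim hook tableaux of shape λ and type (k^p). -/

import Mathlib

open scoped BigOperators

namespace RimHookPaper

/-- A partition: a weakly decreasing, eventually-zero sequence of naturals;
`parts n` is the `(n+1)`-st part. -/
structure Partition : Type where
  parts : ℕ → ℕ
  antitone : ∀ ⦃i j : ℕ⦄, i ≤ j → parts j ≤ parts i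
  eventually_zero : ∃ N : ℕ, ∀ i : ℕ, N ≤ i → parts i = 0

namespace Partition

/-- The size `|λ|` of a partition. -/
noncomputable def size (P : Partition) : ℕ := ∑ᶠ i, P.parts i

/-- The empty partition. -/
def empty : Partition := ⟨fun _ => 0, fun _ _ _ => le_rfl, ⟨0, fun _ _ => rfl⟩⟩

/-- The number of nonzero parts of a partition. -/
noncomputable def length (P : Partition) : ℕ := sInf {N | P.parts N = 0}

/-- The cells of the Young diagram of a partition. -/
def cells (P : Partition) : Set (ℕ × ℕ) := {c | c.2 < P.parts c.1}

instance : LE Partition := ⟨fun Q P => ∀ i, Q.parts i ≤ P.parts i⟩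

/-- The skew shape `P / Q` (as a set of cells). -/
def skew (P Q : Partition) : Set (ℕ × ℕ) := P.cells \ Q.cells

end Partition

/-- Edge-adjacency of cells. -/
def Adj (c d : ℕ × ℕ) : Prop :=
  (c.1 = d.1 ∧ (c.2 + 1 = d.2 ∨ d.2 + 1 = c.2)) ∨
    (c.2 = d.2 ∧ (c.1 + 1 = d.1 ∨ d.1 + 1 = c.1))

/-- A set of cells is (edge-)connected. -/
def IsConnectedSet (S : Set (ℕ × ℕ)) : Prop :=
  ∀ c ∈ S, ∀ d ∈ S, Relation.ReflTransGen (fun x y => x ∈ S ∧ y ∈ S ∧ Adj x y) c d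

/-- `S` contains no 2×2 square. -/
def NoSquare (S : Set (ℕ × ℕ)) : Prop :=
  ¬ ∃ i j : ℕ, (i, j) ∈ S ∧ (i + 1, j) ∈ S ∧ (i, j + 1) ∈ S ∧ (i + 1, j + 1) ∈ S

/-- `P / Q` is a rim hook (border strip) of length `t`: a nonempty connected skew
shape with no 2×2 square, consisting of `t` boxes. -/
def IsRimHook (P Q : Partition) (t : ℕ) : Prop :=
  Q ≤ P ∧ (P.skew Q).Nonempty ∧ IsConnectedSet (P.skew Q) ∧ NoSquare (P.skew Q) ∧
    (P.skew Q).ncard = t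

/-- One step of a rim hook tableau: an empty hook (`t = 0`) or a rim hook of length `t`. -/
def IsStep (P Q : Partition) (t : ℕ) : Prop :=
  (t = 0 ∧ P = Q) ∨ (0 < t ∧ IsRimHook P Q t)

/-- Number of rows met by a set of cells. -/
noncomputable def rowCount (S : Set (ℕ × ℕ)) : ℕ := (Prod.fst '' S).ncard

/-- A rim hook tableau of shape `P` and type `μ`: a chain
`∅ = λ⁰ ⊆ λ¹ ⊆ ⋯ ⊆ λʳ = P` with each `λⁱ/λⁱ⁻¹` a (possibly empty)
rim hook of length `μᵢ`. -/
structure RHT (P : Partition) (μ : List ℕ) : Type where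
  chain : Fin (μ.length + 1) → Partition
  chain_zero : chain 0 = Partition.empty
  chain_last : chain (Fin.last μ.length) = P
  step : ∀ j : Fin μ.length, IsStep (chain j.succ) (chain j.castSucc) (μ.get j)

/-- The total height of a rim hook tableau: the sum of the heights
(number of rows minus one) of its nonempty rim hooks. -/
noncomputable def RHT.height {P : Partition} {μ : List ℕ} (T : RHT P μ) : ℕ :=
  ∑ j : Fin μ.length, (rowCount ((T.chain j.succ).skew (T.chain j.castSucc)) - 1)

/-- The character value `χ^λ_μ` of the symmetric group, via the
Murnaghan–Nakayama rule. -/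
noncomputable def chiAux (P : Partition) (μ : List ℕ) : ℤ :=
  ∑ᶠ T : RHT P μ, (-1 : ℤ) ^ T.height

/-- The parts of a multiset, listed in weakly decreasing order. -/
def typeList (μ : Multiset ℕ) : List ℕ := (μ.sort (· ≤ ·)).reverse

/-- `χ^λ_μ` for a multiset type `μ`. -/
noncomputable def chi (P : Partition) (μ : Multiset ℕ) : ℤ := chiAux P (typeList μ)

/-- `z_μ = ∏_j m_j! · j^{m_j}` where `μ` has `m_j` parts equal to `j`. -/
def zpart (μ : Multiset ℕ) : ℕ := μ.prod * ∏ j ∈ μ.toFinset, (μ.count j).factorial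

/-- `χ^λ(σ)`: the character evaluated at a permutation, via its full cycle type
(including fixed points as parts equal to 1). -/
noncomputable def chiPerm (P : Partition) {m : ℕ} (σ : Equiv.Perm (Fin m)) : ℤ :=
  chi P (σ.cycleType + Multiset.replicate (m - σ.cycleType.sum) 1)

/-- Position of the zero (up step) corresponding to row `n` in the 0/1 sequence
`s(P)`, where the median of `s(P)` is the gap just below position `0`. -/
def zpos (P : Partition) (n : ℕ) : ℤ := (P.parts n : ℤ) - (n : ℤ) - 1

/-- `s(P)` has a `0` (an up step) at position `x`; otherwise it has a `1`. -/
def isZeroAt (P : Partition) (x : ℤ) : Prop := ∃ n : ℕ, zpos P n = x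

/-- `Q` is the `k`-quotient of `P`: for each residue `i`, the 0/1 sequence of `Q i`
is (up to the shift `d` recording the position of its median) the subsequence of
`s(P)` consisting of every `k`-th digit, including the `(i+1)`-st digit after the
median of `s(P)`. -/
def IsKQuotient (k : ℕ) (P : Partition) (Q : Fin k → Partition) : Prop :=
  ∀ i : Fin k, ∃ d : ℤ, ∀ j : ℤ,
    isZeroAt (Q i) j ↔ isZeroAt P (((i : ℕ) : ℤ) + (j + d) * (k : ℤ))

/-- `C` is the `k`-core of `P`: it is obtained from `P` by successively removing
rim hooks of length `k`, as long as possible. -/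
def IsKCore (k : ℕ) (P C : Partition) : Prop :=
  Relation.ReflTransGen (fun A B => IsRimHook A B k) P C ∧ ¬ ∃ C', IsRimHook C C' k

/-- The map on row indices induced by moving the zero in row `m` down (left)
to row `m'`, the zeros in rows `m+1,…,m'` each moving up one row. -/
def cycleFun (m m' n : ℕ) : ℕ :=
  if n = m then m' else if m < n ∧ n ≤ m' then n - 1 else n

/-- One tracking step for the zero permutation: passing from `A` to `B` by removing
a rim hook, encoded on the 0/1 sequence as interchanging a `1` with a later `0`
(the moved zero, in row `m` of `A`, jumps over `m' - m` zeros, landing in row `m'`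
of `B`); the row of each labeled zero is updated by `cycleFun m m'`. -/
def StepTrack (A B : Partition) (f g : ℕ → ℕ) : Prop :=
  (A = B ∧ g = f) ∨
    ∃ m m' : ℕ, m ≤ m' ∧
      (∀ n, n < m → zpos B n = zpos A n) ∧
      (∀ n, m ≤ n → n < m' → zpos B n = zpos A (n + 1)) ∧
      (∀ n, m' < n → zpos B n = zpos A n) ∧
      g = fun i => cycleFun m m' (f i)

/-- `π` is the zero permutation of the rim hook tableau `T`: label the zeros of
`s(P)` succeeding the first one by `1,…,ℓ(P)` from left to right (`q j i` is the
row of label `i+1` at stage `j` of the peeling, rows counted from the top), peel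
the rim hooks of `T` in order of decreasing entries, and read off the labels in
the final sequence `s(∅)` from left to right. -/
def IsZeroPerm {P : Partition} {μ : List ℕ} (T : RHT P μ)
    (π : Equiv.Perm (Fin P.length)) : Prop :=
  ∃ q : Fin (μ.length + 1) → ℕ → ℕ,
    (∀ i : ℕ, i < P.length → q (Fin.last μ.length) i = P.length - 1 - i) ∧
    (∀ j : Fin μ.length,
      StepTrack (T.chain j.succ) (T.chain j.castSucc) (q j.succ) (q j.castSucc)) ∧
    (∀ i : Fin P.length, q 0 ((π i : ℕ)) = P.length - 1 - (i : ℕ))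

/-- `ω(T) = (T₁,…,T_k)`: the rim hook tableau `T` (all of whose hook lengths are
divisible by `k`) decomposes into the `k`-tuple of rim hook tableaux `Ti` on the
`k`-quotient: each step of `T`, removing a hook of length `k·t`, affects exactly
one subsequence (mod `k`) of the 0/1 sequence, i.e. removes a hook of length `t`
from exactly one of the quotient partitions. -/
def OmegaRel (k : ℕ) {P : Partition} {κ : List ℕ} (T : RHT P κ)
    {Q : Fin k → Partition} {ν : Fin k → List ℕ}
    (Ti : ∀ i : Fin k, RHT (Q i) (ν i)) : Prop :=
  ∃ (QC : Fin (κ.length + 1) → Fin k → Partition) (a : Fin κ.length → Fin k),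
    (∀ j, IsKQuotient k (T.chain j) (QC j)) ∧
    (∀ j : Fin κ.length, ∀ i, i ≠ a j → QC j.castSucc i = QC j.succ i) ∧
    (∀ j : Fin κ.length, ∃ t : ℕ, κ.get j = k * t ∧
      IsStep (QC j.succ (a j)) (QC j.castSucc (a j)) t) ∧
    (∀ i : Fin k, ∃ e : Fin (ν i).length → Fin κ.length,
      StrictMono e ∧ (∀ s, a (e s) = i) ∧ (∀ j, a j = i → ∃ s, e s = j) ∧
      (∀ s, k * (ν i).get s = κ.get (e s)) ∧
      (Ti i).chain 0 = QC 0 i ∧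
      (∀ s : Fin (ν i).length, (Ti i).chain s.succ = QC (Fin.succ (e s)) i))

/-!
Peeling off a hook moves one zero of the 0/1 sequence to the left over `h` other zeros, where `h` is
the height of the hook, so it permutes the zeros by a cycle of sign `(-1) ^ h`. Composing these
cycles, the zero permutation of any rim hook tableau `T` has sign `(-1) ^ T.height`.

If all hooks have length `k`, then zeros only move within their residue class modulo `k`, and no
zero jumps over another one of its own class. So each class is mapped to its final position in an
order-preserving way, which leaves only one possibility: the zero permutation does not depend on
the tableau, and all terms of the Murnaghan–Nakayama sum are equal.
-/

section OrderMatching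

variable {α β : Type*}

/-- The permutation `σ` carries the labelling `f` to the labelling `g` and keeps the order of any
two elements with the same label. -/
def IsOrderMatching [Preorder α] (f g : α → β) (σ : Equiv.Perm α) : Prop :=
  (∀ a, g (σ a) = f a) ∧ ∀ a b, a < b → f a = f b → σ a < σ b

theorem IsOrderMatching.one [Preorder α] (f : α → β) : IsOrderMatching f f 1 :=
  ⟨fun _ => rfl, fun _ _ hab _ => hab⟩

theorem IsOrderMatching.mul [Preorder α] {f g h : α → β} {σ τ : Equiv.Perm α}
    (hσ : IsOrderMatching f g σ) (hτ : IsOrderMatching g h τ) : IsOrderMatching f h (τ * σ) :=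
  ⟨fun a => (hτ.1 (σ a)).trans (hσ.1 a), fun a b hab hf =>
    hτ.2 _ _ (hσ.2 a b hab hf) ((hσ.1 a).trans (hf.trans (hσ.1 b).symm))⟩

/-- The order isomorphism between the fibres over `b` induced by an order matching. -/
noncomputable def IsOrderMatching.fiberIso [LinearOrder α] {f g : α → β} {σ : Equiv.Perm α}
    (h : IsOrderMatching f g σ) (b : β) : {a // f a = b} ≃o {a // g a = b} :=
  StrictMono.orderIsoOfSurjective
    (fun a => ⟨σ a, (h.1 a).trans a.2⟩)
    (fun a a' haa' => h.2 a a' haa' (a.2.trans a'.2.symm))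
    (fun a => ⟨⟨σ.symm a, by rw [← h.1, σ.apply_symm_apply, a.2]⟩,
      Subtype.ext (σ.apply_symm_apply a)⟩)

theorem IsOrderMatching.unique [LinearOrder α] [WellFoundedLT α] {f g : α → β}
    {σ τ : Equiv.Perm α} (hσ : IsOrderMatching f g σ) (hτ : IsOrderMatching f g τ) : σ = τ := by
  ext a
  have hiso : hσ.fiberIso (f a) = hτ.fiberIso (f a) := Subsingleton.elim _ _
  exact congrArg Subtype.val (DFunLike.congr_fun hiso ⟨a, rfl⟩)

end OrderMatching

theorem rel_last_zero_prod_ofFn {X G : Type*} [Monoid G] {R : X → X → G → Prop}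
    (one : ∀ x, R x x 1) (mul : ∀ {x y z c d}, R x y c → R y z d → R x z (d * c)) {r : ℕ}
    {x : Fin (r + 1) → X} {c : Fin r → G} (h : ∀ j, R (x j.succ) (x j.castSucc) (c j)) :
    R (x (Fin.last r)) (x 0) (List.ofFn c).prod := by
  induction r with
  | zero => simpa using one (x 0)
  | succ r ih =>
    rw [List.ofFn_succ, List.prod_cons]
    exact mul (ih (x := fun j => x j.succ) fun j => h j.succ) (h 0)

theorem cycleFun_self (m : ℕ) : cycleFun m m = id := by
  funext n
  simp only [cycleFun, id]
  split_ifs <;> omega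

theorem cycleFun_cycleIcc {N : ℕ} {m m' : Fin N} (h : m ≤ m') (i : Fin N) :
    cycleFun m m' (Fin.cycleIcc m m' i) = i := by
  have : NeZero N := ⟨m.pos.ne'⟩
  rcases lt_or_ge i m with him | hmi
  · rw [Fin.cycleIcc_of_lt him]
    simp only [cycleFun]
    split_ifs <;> omega
  rcases lt_trichotomy i m' with him' | rfl | hmi'
  · have hval : ((i + 1 : Fin N) : ℕ) = i + 1 := Fin.val_add_one_of_lt' (by omega)
    rw [Fin.cycleIcc_of_ge_of_lt hmi him', hval]
    simp only [cycleFun]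
    split_ifs <;> omega
  · rw [Fin.cycleIcc_of_last h]
    simp only [cycleFun, if_true]
  · rw [Fin.cycleIcc_of_gt hmi']
    simp only [cycleFun]
    split_ifs <;> omega

theorem exists_perm_coe_eq_cycleFun {N m m' : ℕ} (hm : m ≤ m') (hN : m < m' → m' < N) :
    ∃ c : Equiv.Perm (Fin N), ∀ i, (c i : ℕ) = cycleFun m m' i := by
  rcases hm.eq_or_lt with rfl | hlt
  · exact ⟨1, fun i => by rw [cycleFun_self]; rfl⟩
  · let a : Fin N := ⟨m, by omega⟩
    let b : Fin N := ⟨m', hN hlt⟩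
    refine ⟨(Fin.cycleIcc a b)⁻¹, fun i => ?_⟩
    have h := cycleFun_cycleIcc (m := a) (m' := b) hm ((Fin.cycleIcc a b)⁻¹ i)
    rw [← Equiv.Perm.mul_apply, mul_inv_cancel, Equiv.Perm.one_apply] at h
    exact h.symm

theorem sign_of_coe_eq_cycleFun {N m m' : ℕ} (hm : m ≤ m') (hN : m < m' → m' < N)
    {c : Equiv.Perm (Fin N)} (hc : ∀ i, (c i : ℕ) = cycleFun m m' i) :
    Equiv.Perm.sign c = (-1) ^ (m' - m) := by
  rcases hm.eq_or_lt with rfl | hlt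
  · have : c = 1 := by
      ext i
      rw [hc, cycleFun_self]
      rfl
    rw [this, map_one, Nat.sub_self, pow_zero]
  · let a : Fin N := ⟨m, by omega⟩
    let b : Fin N := ⟨m', hN hlt⟩
    have hinv : c * Fin.cycleIcc a b = 1 := by
      ext i
      exact (hc _).trans (cycleFun_cycleIcc (m := a) (m' := b) hm i)
    rw [eq_inv_of_mul_eq_one_left hinv, Equiv.Perm.sign_inv,
      Fin.sign_cycleIcc_of_le (show a ≤ b from hm)]

namespace Partition

theorem ext_parts {P Q : Partition} (h : ∀ n, P.parts n = Q.parts n) : P = Q := by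
  cases P
  cases Q
  congr
  exact funext h

theorem parts_length (P : Partition) : P.parts P.length = 0 :=
  have ⟨N, hN⟩ := P.eventually_zero
  Nat.sInf_mem (s := {N | P.parts N = 0}) ⟨N, hN N le_rfl⟩

theorem parts_eq_zero_of_length_le {P : Partition} {n : ℕ} (h : P.length ≤ n) : P.parts n = 0 :=
  Nat.eq_zero_of_le_zero ((P.antitone h).trans P.parts_length.le)

theorem mem_skew {A B : Partition} {n j : ℕ} :
    (n, j) ∈ A.skew B ↔ B.parts n ≤ j ∧ j < A.parts n := by
  simp only [skew, cells, Set.mem_sdiff, Set.mem_ofPred_eq, not_lt, and_comm]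

theorem skew_self (A : Partition) : A.skew A = ∅ := Set.sdiff_self

theorem fst_image_skew (A B : Partition) :
    Prod.fst '' A.skew B = {n | B.parts n < A.parts n} := by
  ext n
  simp only [Set.mem_image, Prod.exists, mem_skew, exists_and_right, exists_eq_right,
    Set.mem_ofPred_eq]
  exact ⟨fun ⟨_, hj⟩ => hj.1.trans_lt hj.2, fun h => ⟨_, le_rfl, h⟩⟩

theorem ncard_skew {A B : Partition} {s : Finset ℕ} (hs : ∀ n ∉ s, A.parts n ≤ B.parts n) :
    (A.skew B).ncard = ∑ n ∈ s, (A.parts n - B.parts n) := by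
  have hskew : A.skew B = ((s.sigma fun n => Finset.Ico (B.parts n) (A.parts n)).map
      (Equiv.sigmaEquivProd ℕ ℕ).toEmbedding : Finset (ℕ × ℕ)) := by
    ext ⟨n, j⟩
    simp only [mem_skew, Finset.coe_map, Set.mem_image, Finset.mem_coe, Finset.mem_sigma,
      Finset.mem_Ico, Sigma.exists, Equiv.coe_toEmbedding, Equiv.sigmaEquivProd_apply,
      Prod.mk.injEq]
    constructor
    · intro hj
      have hn : n ∈ s := by_contra fun hn => ((hs n hn).trans hj.1).not_gt hj.2
      exact ⟨n, j, ⟨hn, hj⟩, rfl, rfl⟩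
    · rintro ⟨_, _, hj, rfl, rfl⟩
      exact hj.2
  rw [hskew, Set.ncard_coe_finset, Finset.card_map, Finset.card_sigma]
  exact Finset.sum_congr rfl fun n _ => Nat.card_Ico _ _

instance finite_le (P : Partition) : Finite {Q : Partition // ∀ n, Q.parts n ≤ P.parts n} := by
  let rows (Q : {Q : Partition // ∀ n, Q.parts n ≤ P.parts n}) (i : Fin P.length) :
      Fin (P.parts i + 1) := ⟨Q.1.parts i, Nat.lt_succ_of_le (Q.2 i)⟩
  refine Finite.of_injective rows fun Q Q' h => Subtype.ext (ext_parts fun n => ?_)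
  rcases lt_or_ge n P.length with hn | hn
  · exact congrArg Fin.val (congrFun h ⟨n, hn⟩)
  · have hP := parts_eq_zero_of_length_le hn
    have hQ := Q.2 n
    have hQ' := Q'.2 n
    omega

end Partition

theorem zpos_strictAnti (A : Partition) : StrictAnti (zpos A) := fun i j hij => by
  have := A.antitone hij.le
  unfold zpos
  omega

/-- The rearrangement of zeros used in `StepTrack`: the zero in row `m` of `A` moves to row `m'`
of `B`, the zeros in rows `m + 1, …, m'` move up one row without changing their position, and the
zeros in all other rows stay. -/
structure IsRowShift (A B : Partition) (m m' : ℕ) : Prop where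
  le : m ≤ m'
  above : ∀ n, n < m → zpos B n = zpos A n
  shift : ∀ n, m ≤ n → n < m' → zpos B n = zpos A (n + 1)
  below : ∀ n, m' < n → zpos B n = zpos A n

theorem IsRowShift.refl (A : Partition) (m : ℕ) : IsRowShift A A m m :=
  ⟨le_rfl, fun _ _ => rfl, fun _ h₁ h₂ => absurd h₂ h₁.not_gt, fun _ _ => rfl⟩

section RowShift

variable {A B : Partition} {m m' : ℕ}

theorem IsRowShift.parts_eq (h : IsRowShift A B m m') {n : ℕ} (hn : ¬ (m ≤ n ∧ n ≤ m')) :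
    B.parts n = A.parts n := by
  have : zpos B n = zpos A n := by
    rcases lt_or_ge n m with hnm | hmn
    · exact h.above n hnm
    · exact h.below n (by omega)
  unfold zpos at this
  omega

theorem IsRowShift.parts_lt (h : IsRowShift A B m m') (hm : m < m') {n : ℕ} (hmn : m ≤ n)
    (hnm : n ≤ m') : B.parts n < A.parts n := by
  have : zpos B n < zpos A n := by
    rcases hnm.lt_or_eq with hlt | rfl
    · rw [h.shift n hmn hlt]
      exact zpos_strictAnti A n.lt_succ_self
    · calc zpos B n < zpos B (n - 1) := zpos_strictAnti B (by omega)
        _ = zpos A n := by rw [h.shift (n - 1) (by omega) (by omega), Nat.sub_add_cancel (by omega)]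
  unfold zpos at this
  omega

theorem IsRowShift.bot_lt_of_parts_eq_zero (h : IsRowShift A B m m') {N : ℕ}
    (hN : A.parts N = 0) (hm : m < m') : m' < N := by
  by_contra! hle
  have := A.antitone hle
  have := h.parts_lt hm hm.le le_rfl
  omega

theorem IsRowShift.cycleFun_eq (h : IsRowShift A B m m') {n n' : ℕ} (h' : IsRowShift A B n n') :
    cycleFun m m' = cycleFun n n' := by
  have nested {a a' b b' : ℕ} (ha : IsRowShift A B a a') (hb : IsRowShift A B b b')
      (hlt : a < a') : b ≤ a ∧ a' ≤ b' := by
    have hmoved {i : ℕ} (h₁ : a ≤ i) (h₂ : i ≤ a') : b ≤ i ∧ i ≤ b' := by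
      by_contra hi
      exact (ha.parts_lt hlt h₁ h₂).ne (hb.parts_eq hi)
    exact ⟨(hmoved le_rfl hlt.le).1, (hmoved hlt.le le_rfl).2⟩
  rcases h.le.eq_or_lt with rfl | hm
  · rcases h'.le.eq_or_lt with rfl | hn
    · rw [cycleFun_self, cycleFun_self]
    · have := nested h' h hn
      omega
  · obtain ⟨hnm, hmn'⟩ := nested h h' hm
    obtain ⟨hmn, hnm'⟩ := nested h' h (by omega)
    rw [hmn.antisymm hnm, hmn'.antisymm hnm']

theorem stepTrack_iff {f g : ℕ → ℕ} :
    StepTrack A B f g ↔ ∃ m m', IsRowShift A B m m' ∧ g = fun i => cycleFun m m' (f i) := by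
  constructor
  · rintro (⟨rfl, rfl⟩ | ⟨m, m', hm, above, shift, below, hg⟩)
    · exact ⟨0, 0, .refl A 0, by simp only [cycleFun_self, id]⟩
    · exact ⟨m, m', ⟨hm, above, shift, below⟩, hg⟩
  · rintro ⟨m, m', h, hg⟩
    exact Or.inr ⟨m, m', h.le, h.above, h.shift, h.below, hg⟩

theorem IsRowShift.rowCount_skew_sub_one (h : IsRowShift A B m m') :
    rowCount (A.skew B) - 1 = m' - m := by
  rw [rowCount, Partition.fst_image_skew]
  have hsub : {n | B.parts n < A.parts n} ⊆ ↑(Finset.Icc m m') := fun n hn =>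
    Finset.mem_coe.2 (Finset.mem_Icc.2 (by_contra fun hn' => hn.ne (h.parts_eq hn')))
  rcases h.le.eq_or_lt with rfl | hm
  · have := Set.ncard_le_ncard hsub
    rw [Set.ncard_coe_finset, Nat.card_Icc] at this
    omega
  · have heq : {n | B.parts n < A.parts n} = ↑(Finset.Icc m m') := by
      refine hsub.antisymm fun n hn => ?_
      have hn := Finset.mem_Icc.1 (Finset.mem_coe.1 hn)
      exact h.parts_lt hm hn.1 hn.2
    rw [heq, Set.ncard_coe_finset, Nat.card_Icc]
    omega

theorem IsRowShift.ncard_skew (h : IsRowShift A B m m') (hle : B ≤ A) :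
    ((A.skew B).ncard : ℤ) = zpos A m - zpos B m' := by
  have hA : ∑ n ∈ Finset.Ico m (m' + 1), zpos A n =
      zpos A m + ∑ n ∈ Finset.Ico m m', zpos A (n + 1) := by
    rw [Finset.sum_eq_sum_Ico_succ_bot (Nat.lt_succ_of_le h.le), Finset.sum_Ico_add']
  have hB : ∑ n ∈ Finset.Ico m (m' + 1), zpos B n =
      ∑ n ∈ Finset.Ico m m', zpos A (n + 1) + zpos B m' := by
    rw [Finset.sum_Ico_succ_top h.le]
    congr 1
    refine Finset.sum_congr rfl fun n hn => ?_
    obtain ⟨h₁, h₂⟩ := Finset.mem_Ico.1 hn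
    exact h.shift n h₁ h₂
  have hout : ∀ n ∉ Finset.Ico m (m' + 1), A.parts n ≤ B.parts n := fun n hn =>
    (h.parts_eq fun hn' => hn (Finset.mem_Ico.2 ⟨hn'.1, Nat.lt_succ_of_le hn'.2⟩)).ge
  calc ((A.skew B).ncard : ℤ)
      = ∑ n ∈ Finset.Ico m (m' + 1), (zpos A n - zpos B n) := by
        rw [Partition.ncard_skew hout, Nat.cast_sum]
        refine Finset.sum_congr rfl fun n _ => ?_
        rw [Nat.cast_sub (hle n)]
        unfold zpos
        ring
    _ = zpos A m - zpos B m' := by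
        rw [Finset.sum_sub_distrib, hA, hB]
        ring

end RowShift

section RimHook

variable {A B : Partition} {t : ℕ}

theorem exists_mem_succ_mem_of_reflTransGen {S : Set (ℕ × ℕ)} {c d : ℕ × ℕ}
    (h : Relation.ReflTransGen (fun x y => x ∈ S ∧ y ∈ S ∧ Adj x y) c d) {n : ℕ}
    (hc : c.1 ≤ n) (hd : n < d.1) : ∃ j, (n, j) ∈ S ∧ (n + 1, j) ∈ S := by
  induction h with
  | refl => omega
  | @tail x y _ hxy ih =>
    rcases lt_or_ge n x.1 with hx | hx
    · exact ih hx
    · obtain ⟨x₁, x₂⟩ := x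
      obtain ⟨y₁, y₂⟩ := y
      obtain ⟨hxS, hyS, hadj⟩ := hxy
      simp only [Adj] at hadj hx hd
      obtain ⟨rfl, rfl, rfl⟩ : x₁ = n ∧ y₁ = n + 1 ∧ x₂ = y₂ := by omega
      exact ⟨_, hxS, hyS⟩

theorem IsRimHook.parts_succ_eq (h : IsRimHook A B t) {a b n : ℕ} (ha : B.parts a < A.parts a)
    (hb : B.parts b < A.parts b) (han : a ≤ n) (hnb : n < b) :
    A.parts (n + 1) = B.parts n + 1 := by
  obtain ⟨-, -, hconn, hsq, -⟩ := h
  have hlt : B.parts n < A.parts (n + 1) := by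
    obtain ⟨j, hj, hj'⟩ := exists_mem_succ_mem_of_reflTransGen
      (hconn (a, B.parts a) (Partition.mem_skew.2 ⟨le_rfl, ha⟩)
        (b, B.parts b) (Partition.mem_skew.2 ⟨le_rfl, hb⟩)) han hnb
    rw [Partition.mem_skew] at hj hj'
    omega
  by_contra hne
  have hA := A.antitone n.le_succ
  have hB := B.antitone n.le_succ
  rw [Nat.succ_eq_add_one] at hA hB
  refine hsq ⟨n, B.parts n, ?_, ?_, ?_, ?_⟩ <;> rw [Partition.mem_skew] <;> omega

theorem IsRimHook.exists_isRowShift (h : IsRimHook A B t) : ∃ m m', IsRowShift A B m m' := by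
  let S : Set ℕ := {n | B.parts n < A.parts n}
  have hne : S.Nonempty :=
    (h.2.1.image Prod.fst).mono (Partition.fst_image_skew A B).subset
  have hfin : S.Finite := (Set.finite_Iio A.length).subset fun n hn => by
    by_contra hle
    exact hn.ne_bot (Partition.parts_eq_zero_of_length_le (not_lt.1 hle))
  obtain ⟨m, hm, hmin⟩ := Set.exists_min_image S id hfin hne
  obtain ⟨m', hm', hmax⟩ := Set.exists_max_image S id hfin hne
  have hout {n : ℕ} (hn : n ∉ S) : zpos B n = zpos A n := by
    have := (h.1 n).antisymm (not_lt.1 hn)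
    rw [zpos, zpos, this]
  refine ⟨m, m', hmin m' hm', fun n hn => hout fun hS => (hmin n hS).not_gt hn,
    fun n hmn hnm' => ?_, fun n hn => hout fun hS => (hmax n hS).not_gt hn⟩
  have := h.parts_succ_eq hm hm' hmn hnm'
  unfold zpos
  omega

theorem IsStep.le (h : IsStep A B t) : B ≤ A := by
  rcases h with ⟨-, rfl⟩ | ⟨-, hook⟩
  · exact fun _ => le_rfl
  · exact hook.1

theorem IsStep.ncard_skew (h : IsStep A B t) : (A.skew B).ncard = t := by
  rcases h with ⟨rfl, rfl⟩ | ⟨-, hook⟩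
  · rw [Partition.skew_self, Set.ncard_empty]
  · exact hook.2.2.2.2

theorem IsStep.exists_isRowShift (h : IsStep A B t) : ∃ m m', IsRowShift A B m m' := by
  rcases h with ⟨-, rfl⟩ | ⟨-, hook⟩
  · exact ⟨0, 0, .refl A 0⟩
  · exact hook.exists_isRowShift

theorem IsStep.exists_stepTrack (h : IsStep A B t) (f : ℕ → ℕ) : ∃ g, StepTrack A B f g :=
  have ⟨m, m', hs⟩ := h.exists_isRowShift
  ⟨_, stepTrack_iff.2 ⟨m, m', hs, rfl⟩⟩

end RimHook

/-- The residue modulo `k` of the position of the zero in each of the first `N` rows. -/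
def zeroResidue (k : ℕ) {N : ℕ} (A : Partition) (i : Fin N) : ZMod k := (zpos A i : ZMod k)

/-- `c` sends the row of each zero in the first `N` rows of `A` to the row of the same zero in `B`,
in the sense of `StepTrack`. -/
def IsStepPerm {N : ℕ} (A B : Partition) (c : Equiv.Perm (Fin N)) : Prop :=
  ∃ m m', IsRowShift A B m m' ∧ ∀ i, (c i : ℕ) = cycleFun m m' i

section StepPerm

variable {A B : Partition} {t N : ℕ} {c : Equiv.Perm (Fin N)}

theorem IsStep.exists_isStepPerm (h : IsStep A B t) (hN : A.parts N = 0) :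
    ∃ c : Equiv.Perm (Fin N), IsStepPerm A B c := by
  obtain ⟨m, m', hs⟩ := h.exists_isRowShift
  obtain ⟨c, hc⟩ := exists_perm_coe_eq_cycleFun hs.le (hs.bot_lt_of_parts_eq_zero hN)
  exact ⟨c, m, m', hs, hc⟩

theorem IsStepPerm.sign_eq (hc : IsStepPerm A B c) (hN : A.parts N = 0) :
    Equiv.Perm.sign c = (-1) ^ (rowCount (A.skew B) - 1) := by
  obtain ⟨m, m', hs, hc⟩ := hc
  rw [hs.rowCount_skew_sub_one,
    sign_of_coe_eq_cycleFun hs.le (hs.bot_lt_of_parts_eq_zero hN) hc]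

theorem IsStepPerm.eq_apply_of_stepTrack (hc : IsStepPerm A B c) {f g : ℕ → ℕ}
    (h : StepTrack A B f g) {i : ℕ} {y : Fin N} (hy : f i = y) : g i = c y := by
  obtain ⟨m, m', hs, hc⟩ := hc
  obtain ⟨n, n', hs', rfl⟩ := stepTrack_iff.1 h
  rw [hc, hs.cycleFun_eq hs', ← hy]

theorem IsRowShift.zeroResidue_ne {m m' : ℕ} (hs : IsRowShift A B m m')
    (hbot : zpos B m' = zpos A m - t) {j : ℕ} (hmj : m < j) (hjm' : j ≤ m') :
    (zpos A m : ZMod t) ≠ zpos A j := by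
  intro heq
  have hlow : zpos A m - t < zpos A j := by
    calc zpos A m - t = zpos B m' := hbot.symm
      _ < zpos B (j - 1) := zpos_strictAnti B (by omega)
      _ = zpos A j := by rw [hs.shift (j - 1) (by omega) (by omega), Nat.sub_add_cancel (by omega)]
  have hhigh : zpos A j < zpos A m := zpos_strictAnti A hmj
  have hdvd := (ZMod.intCast_eq_intCast_iff_dvd_sub _ _ t).1 heq
  have := Int.eq_zero_of_abs_lt_dvd hdvd (abs_lt.2 ⟨by omega, by omega⟩)
  omega

/-- The only zero that moves jumps over the zeros at distance less than `t`, and none of these has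
its residue. -/
theorem IsStepPerm.isOrderMatching (hc : IsStepPerm A B c) (h : IsStep A B t) :
    IsOrderMatching (zeroResidue t A) (zeroResidue t B) c := by
  obtain ⟨m, m', hs, hc⟩ := hc
  have hbot : zpos B m' = zpos A m - t := by
    have := hs.ncard_skew h.le
    rw [h.ncard_skew] at this
    omega
  constructor
  · intro i
    rw [zeroResidue, zeroResidue, hc, cycleFun]
    split_ifs with him hmi
    · rw [hbot, him, Int.cast_sub, Int.cast_natCast, ZMod.natCast_self, sub_zero]
    · rw [hs.shift (i - 1) (by omega) (by omega), Nat.sub_add_cancel (by omega)]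
    · rcases lt_or_ge (i : ℕ) m with hlt | hge
      · rw [hs.above _ hlt]
      · rw [hs.below _ (by omega)]
  · intro i j hij hres
    rw [Fin.lt_def] at hij ⊢
    have hjump : ¬ ((i : ℕ) = m ∧ (j : ℕ) ≤ m') := by
      rintro ⟨hi, hj⟩
      rw [zeroResidue, zeroResidue, hi] at hres
      exact hs.zeroResidue_ne hbot (hi ▸ hij) hj hres
    have := hs.le
    rw [hc, hc, cycleFun, cycleFun]
    split_ifs <;> omega

end StepPerm

namespace RHT

variable {P : Partition} {μ : List ℕ}

theorem parts_chain_le (T : RHT P μ) (j : Fin (μ.length + 1)) (n : ℕ) :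
    (T.chain j).parts n ≤ P.parts n := by
  have hmono : Monotone fun j => (T.chain j).parts n :=
    Fin.monotone_iff_le_succ.2 fun j => (T.step j).le n
  exact (hmono (Fin.le_last j)).trans_eq (congrArg (fun Q => Q.parts n) T.chain_last)

theorem parts_chain_length (T : RHT P μ) (j : Fin (μ.length + 1)) :
    (T.chain j).parts P.length = 0 :=
  Nat.eq_zero_of_le_zero ((T.parts_chain_le j _).trans P.parts_length.le)

instance : Finite (RHT P μ) := by
  let chains (T : RHT P μ) (j : Fin (μ.length + 1)) :
      {Q : Partition // ∀ n, Q.parts n ≤ P.parts n} := ⟨T.chain j, T.parts_chain_le j⟩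
  refine Finite.of_injective chains fun T T' h => ?_
  have hchain : T.chain = T'.chain := funext fun j => congrArg Subtype.val (congrFun h j)
  cases T
  cases T'
  congr

theorem exists_stepTrack (T : RHT P μ) (f : ℕ → ℕ) :
    ∃ q : Fin (μ.length + 1) → ℕ → ℕ, q (Fin.last _) = f ∧
      ∀ j : Fin μ.length,
        StepTrack (T.chain j.succ) (T.chain j.castSucc) (q j.succ) (q j.castSucc) := by
  choose next hnext using fun j => (T.step j).exists_stepTrack
  refine ⟨Fin.reverseInduction f next, Fin.reverseInduction_last .., fun j => ?_⟩
  simpa only [Fin.reverseInduction_castSucc] using hnext j _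

/-- `ρ` sends the row of each zero of `s(P)` to its row after peeling off all rim hooks of `T`.
Since rows are numbered from the top and the labels of zeros from the bottom, the zero permutation
is `ρ⁻¹` up to reversal, see `IsRowPerm.isZeroPerm_iff`. -/
def IsRowPerm (T : RHT P μ) (ρ : Equiv.Perm (Fin P.length)) : Prop :=
  ∃ c : Fin μ.length → Equiv.Perm (Fin P.length),
    (∀ j, IsStepPerm (T.chain j.succ) (T.chain j.castSucc) (c j)) ∧ ρ = (List.ofFn c).prod

theorem exists_isRowPerm (T : RHT P μ) : ∃ ρ, T.IsRowPerm ρ := by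
  choose c hc using fun j => (T.step j).exists_isStepPerm (T.parts_chain_length j.succ)
  exact ⟨_, c, hc, rfl⟩

variable {T : RHT P μ} {ρ : Equiv.Perm (Fin P.length)}

theorem IsRowPerm.sign_eq (hρ : T.IsRowPerm ρ) : Equiv.Perm.sign ρ = (-1) ^ T.height := by
  obtain ⟨c, hc, rfl⟩ := hρ
  rw [map_list_prod, List.map_ofFn, List.prod_ofFn, height, ← Finset.prod_pow_eq_pow_sum]
  exact Finset.prod_congr rfl fun j _ => (hc j).sign_eq (T.parts_chain_length _)

theorem IsRowPerm.eq_apply_of_stepTrack (hρ : T.IsRowPerm ρ) {q : Fin (μ.length + 1) → ℕ → ℕ}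
    (hq : ∀ j : Fin μ.length,
      StepTrack (T.chain j.succ) (T.chain j.castSucc) (q j.succ) (q j.castSucc))
    {i : ℕ} {y : Fin P.length} (hy : q (Fin.last _) i = y) : q 0 i = ρ y := by
  obtain ⟨c, hc, rfl⟩ := hρ
  let Tracks (a b : ℕ) (σ : Equiv.Perm (Fin P.length)) : Prop :=
    ∀ y : Fin P.length, a = y → b = σ y
  have htracks : Tracks (q (Fin.last _) i) (q 0 i) (List.ofFn c).prod :=
    rel_last_zero_prod_ofFn (R := Tracks) (x := fun j => q j i) (fun _ _ h => h)
      (fun hσ hτ y hy => hτ _ (hσ y hy)) fun j _ hy => (hc j).eq_apply_of_stepTrack (hq j) hy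
  exact htracks y hy

theorem IsRowPerm.isZeroPerm_iff (hρ : T.IsRowPerm ρ) {π : Equiv.Perm (Fin P.length)} :
    IsZeroPerm T π ↔ ρ * Fin.revPerm * π = Fin.revPerm := by
  have coe_rev (x : Fin P.length) : P.length - 1 - (x : ℕ) = Fin.rev x := by
    rw [Fin.val_rev]
    omega
  constructor
  · rintro ⟨q, hlast, hq, hzero⟩
    ext i
    have hi : q (Fin.last _) (π i) = Fin.rev (π i) := by rw [hlast _ (π i).2, coe_rev]
    calc (ρ (Fin.rev (π i)) : ℕ) = q 0 (π i) := (hρ.eq_apply_of_stepTrack hq hi).symm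
      _ = Fin.rev i := by rw [hzero, coe_rev]
  · intro h
    obtain ⟨q, hlast, hq⟩ := T.exists_stepTrack fun i => P.length - 1 - i
    refine ⟨q, fun i _ => congrFun hlast i, hq, fun i => ?_⟩
    have hi : q (Fin.last _) (π i) = Fin.rev (π i) := (congrFun hlast _).trans (coe_rev _)
    calc q 0 (π i) = ρ (Fin.rev (π i)) := hρ.eq_apply_of_stepTrack hq hi
      _ = Fin.rev i := congrArg Fin.val (DFunLike.congr_fun h i)
      _ = P.length - 1 - i := (coe_rev i).symm

theorem IsRowPerm.isOrderMatching {k p : ℕ} {T : RHT P (List.replicate p k)}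
    (hρ : T.IsRowPerm ρ) :
    IsOrderMatching (zeroResidue k P) (zeroResidue k Partition.empty) ρ := by
  obtain ⟨c, hc, rfl⟩ := hρ
  have hstep (j : Fin _) : IsStep (T.chain j.succ) (T.chain j.castSucc) k := by
    simpa only [List.get_eq_getElem, List.getElem_replicate] using T.step j
  have hmatch := rel_last_zero_prod_ofFn (R := IsOrderMatching)
    (x := fun j => zeroResidue k (T.chain j)) IsOrderMatching.one IsOrderMatching.mul
    fun j => (hc j).isOrderMatching (hstep j)
  rwa [T.chain_last, T.chain_zero] at hmatch

theorem exists_isZeroPerm (T : RHT P μ) : ∃ π, IsZeroPerm T π :=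
  have ⟨_, hρ⟩ := T.exists_isRowPerm
  ⟨_, hρ.isZeroPerm_iff.2 (mul_inv_cancel_left _ _)⟩

end RHT

theorem IsZeroPerm.sign_eq {P : Partition} {μ : List ℕ} {T : RHT P μ}
    {π : Equiv.Perm (Fin P.length)} (hπ : IsZeroPerm T π) :
    Equiv.Perm.sign π = (-1) ^ T.height := by
  obtain ⟨ρ, hρ⟩ := T.exists_isRowPerm
  have h := congrArg Equiv.Perm.sign (hρ.isZeroPerm_iff.1 hπ)
  rw [map_mul, map_mul, mul_right_comm, mul_eq_right] at h
  rw [← hρ.sign_eq, eq_inv_of_mul_eq_one_right h, Int.units_inv_eq_self]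

theorem IsZeroPerm.eq_of_replicate {P : Partition} {k p : ℕ} {T T' : RHT P (List.replicate p k)}
    {π π' : Equiv.Perm (Fin P.length)} (hπ : IsZeroPerm T π) (hπ' : IsZeroPerm T' π') :
    π = π' := by
  obtain ⟨ρ, hρ⟩ := T.exists_isRowPerm
  obtain ⟨ρ', hρ'⟩ := T'.exists_isRowPerm
  obtain rfl : ρ = ρ' := hρ.isOrderMatching.unique hρ'.isOrderMatching
  exact mul_left_cancel ((hρ.isZeroPerm_iff.1 hπ).trans (hρ'.isZeroPerm_iff.1 hπ').symm)

/-- for `λ` with empty `k`-core and `p = |λ|/k`,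
`χ^λ_{(k^p)} = sign(π_λ) · |RHT_{(k^p)}^λ|`, where `π_λ` is the common zero
permutation of all rim hook tableaux of shape `λ` and type `(k^p)`. -/
theorem chi_k_pow_p_eq_sign_mul_card (k p : ℕ) (hk : 2 ≤ k) (P : Partition)
    (hcore : IsKCore k P Partition.empty) (hp : P.size = k * p)
    (T₀ : RHT P (List.replicate p k)) (π : Equiv.Perm (Fin P.length))
    (hπ : IsZeroPerm T₀ π) :
    chiAux P (List.replicate p k) =
      (Equiv.Perm.sign π : ℤ) * (Nat.card (RHT P (List.replicate p k)) : ℤ) := by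
  have height_sign (T : RHT P (List.replicate p k)) :
      (-1 : ℤ) ^ T.height = (Equiv.Perm.sign π : ℤ) := by
    obtain ⟨π', hπ'⟩ := T.exists_isZeroPerm
    rw [hπ.eq_of_replicate hπ', hπ'.sign_eq, Units.val_pow_eq_pow_val, Units.val_neg, Units.val_one]
  have := Fintype.ofFinite (RHT P (List.replicate p k))
  simp only [chiAux, height_sign, finsum_eq_sum_of_fintype, Finset.sum_const, Finset.card_univ,
    nsmul_eq_mul, Nat.card_eq_fintype_card, mul_comm]

end RimHookPaper
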